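/- arXiv:1707.02797 — 5 statements merged into one kernel-verified Lean document; each statement's English description precedes it below -/
import Mathlib

section
/- Let A be a commutative ring and let v : A → Γ_v and w : A → Γ_w be valuations of A with values in linearly ordered commutative groups with zero (multiplicative notation). Let G_v denote the subgroup of Γ_vˣ generated by the nonzero values v(f) (f ∈ A), and G_w the subgroup of Γ_wˣ generated by the nonzero values w(f). Then the following are equivalent: (a) for all f, g ∈ A, if v(f) ≤ v(g) and v(g) ≠ 0, then w(f) ≤ w(g) and w(g) ≠ 0; (b) there exists a monotone (order-preserving) group homomorphism φ : G_v → G_w such that for every f ∈ A with v(f) ≠ 0 one has w(f) ≠ 0 and φ(v(f)) = w(f), and moreover for all f, g ∈ A with v(f) = 0 and v(g) ≠ 0 one has w(f) ≤ w(g). -/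
/-- The value group of a valuation `v` on a ring `A`: the subgroup of `Γˣ` generated by the
nonzero values `v f`, `f ∈ A`. -/
def valueSubgroup {A Γ : Type*} [CommRing A] [LinearOrderedCommGroupWithZero Γ]
    (v : Valuation A Γ) : Subgroup Γˣ :=
  Subgroup.closure {γ : Γˣ | ∃ f : A, v f = (γ : Γ)}

theorem valueSubgroup_exists_frac {A Γ : Type*} [CommRing A] [LinearOrderedCommGroupWithZero Γ]
    (v : Valuation A Γ) (x : Γˣ) (hx : x ∈ valueSubgroup v) :
    ∃ f g : A, v f ≠ 0 ∧ v g ≠ 0 ∧ v f = (x : Γ) * v g := by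
  unfold valueSubgroup at hx
  induction hx using Subgroup.closure_induction with
  | mem x hx =>
    obtain ⟨f, hf⟩ := hx
    exact ⟨f, 1, by simp [hf], by simp, by simp [hf]⟩
  | one => exact ⟨1, 1, by simp, by simp, by simp⟩
  | mul x y _ _ hx hy =>
    obtain ⟨f, g, hf, hg, h⟩ := hx
    obtain ⟨f', g', hf', hg', h'⟩ := hy
    refine ⟨f * f', g * g', by simp [hf, hf'], by simp [hg, hg'], ?_⟩
    rw [map_mul, map_mul, h, h', Units.val_mul, mul_mul_mul_comm]
  | inv x _ hx =>
    obtain ⟨f, g, hf, hg, h⟩ := hx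
    exact ⟨g, f, hg, hf, by rw [h, Units.inv_mul_cancel_left]⟩

/-- Characterization of specialization in the adic spectrum: `w ⤳ v` (i.e. every
rational-type subset containing `v` contains `w`) if and only if the valuations induce a
monotone group homomorphism `G_v → G_w` sending `v f` to `w f` such that moreover
`v g ≤ v f = +∞` implies `w g ≤ w f` (additive notation). -/
theorem specializes_iff_monotone_hom {A : Type*} [CommRing A]
    {Γv Γw : Type*} [LinearOrderedCommGroupWithZero Γv] [LinearOrderedCommGroupWithZero Γw]
    (v : Valuation A Γv) (w : Valuation A Γw) :
    (∀ f g : A, v f ≤ v g → v g ≠ 0 → w f ≤ w g ∧ w g ≠ 0) ↔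
      ∃ φ : valueSubgroup v →* valueSubgroup w, Monotone ⇑φ ∧
        (∀ f : A, v f ≠ 0 → w f ≠ 0) ∧
        (∀ (f : A) (hf : v f ≠ 0),
          ((φ ⟨Units.mk0 (v f) hf, Subgroup.subset_closure ⟨f, rfl⟩⟩ : Γwˣ) : Γw) = w f) ∧
        (∀ f g : A, v f = 0 → v g ≠ 0 → w f ≤ w g) := by
  constructor
  · intro H
    have hne : ∀ f : A, v f ≠ 0 → w f ≠ 0 := fun f hf => (H f f le_rfl hf).2
    have key : ∀ (x y : Γvˣ) (f g f' g' : A), x ≤ y → v g ≠ 0 → v f' ≠ 0 →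
        v f = (x : Γv) * v g → v f' = (y : Γv) * v g' → w f * w g' ≤ w f' * w g := by
      intro x y f g f' g' hxy hg hf' h h'
      rw [← map_mul, ← map_mul]
      refine (H _ _ ?_ ?_).1
      · rw [map_mul, map_mul, h, h', mul_assoc, mul_assoc, mul_comm (v g')]
        exact mul_le_mul_left (Units.val_le_val.2 hxy) _
      · rw [map_mul]; exact mul_ne_zero hf' hg
    choose n d hn hd hnd using fun x : valueSubgroup v => valueSubgroup_exists_frac v x.1 x.2
    let u : ∀ f : A, v f ≠ 0 → valueSubgroup w := fun f hf =>
      ⟨Units.mk0 (w f) (hne f hf), Subgroup.subset_closure ⟨f, rfl⟩⟩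
    let F : valueSubgroup v → valueSubgroup w := fun x => u (n x) (hn x) / u (d x) (hd x)
    have hF : ∀ x, ((F x : Γwˣ) : Γw) = w (n x) / w (d x) := by
      intro x
      simp [F, u]
    have uniq : ∀ (x : valueSubgroup v) (f g : A), v f ≠ 0 → v g ≠ 0 →
        v f = ((x : Γvˣ) : Γv) * v g → ((F x : Γwˣ) : Γw) = w f / w g := by
      intro x f g hf hg h
      rw [hF, div_eq_div_iff (hne _ (hd x)) (hne _ hg)]
      exact le_antisymm (key _ _ _ _ _ _ le_rfl (hd x) hf (hnd x) h)
        (key _ _ _ _ _ _ le_rfl hg (hn x) h (hnd x))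
    refine ⟨MonoidHom.mk' F ?_, ?_, hne, ?_, ?_⟩
    · intro x y
      apply Subtype.ext
      apply Units.ext
      rw [uniq (x * y) (n x * n y) (d x * d y) (by simp [hn]) (by simp [hd])
        (by rw [map_mul, map_mul, hnd x, hnd y, Subgroup.coe_mul, Units.val_mul,
              mul_mul_mul_comm])]
      rw [Subgroup.coe_mul, Units.val_mul, hF, hF, map_mul, map_mul, mul_div_mul_comm]
    · intro x y hxy
      change ((F x : Γwˣ) : Γw) ≤ ((F y : Γwˣ) : Γw)
      rw [hF, hF, div_le_div_iff₀ (zero_lt_iff.2 (hne _ (hd x))) (zero_lt_iff.2 (hne _ (hd y)))]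
      exact key _ _ _ _ _ _ hxy (hd x) (hn y) (hnd x) (hnd y)
    · intro f hf
      have := uniq ⟨Units.mk0 (v f) hf, Subgroup.subset_closure ⟨f, rfl⟩⟩ f 1 hf (by simp)
        (by simp)
      simpa using this
    · intro f g hf hg
      exact (H f g (by simp [hf]) hg).1
  · rintro ⟨φ, hm, hne, hφ, h0⟩ f g hfg hg
    refine ⟨?_, hne g hg⟩
    by_cases hf : v f = 0
    · exact h0 f g hf hg
    · rw [← hφ f hf, ← hφ g hg]
      exact hm (show (⟨Units.mk0 (v f) hf, Subgroup.subset_closure ⟨f, rfl⟩⟩ : valueSubgroup v) ≤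
        ⟨Units.mk0 (v g) hg, Subgroup.subset_closure ⟨g, rfl⟩⟩ from hfg)
end

section
/- Let A be a commutative ring and let v : A → Γ_v and w : A → Γ_w be valuations of A with values in linearly ordered commutative groups with zero (multiplicative notation). Assume that w specializes to v, i.e. for all f, g ∈ A: v(f) ≤ v(g) and v(g) ≠ 0 imply w(f) ≤ w(g) and w(g) ≠ 0. Then for every f ∈ A, if f is w-topologically nilpotent then f is v-topologically nilpotent; here an element f is called u-topologically nilpotent (for a valuation u on A) if for every g ∈ A with u(g) ≠ 0 there exists n ∈ ℕ with u(fⁿ) < u(g). -/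
/-- An element `f` of a ring `A` is topologically nilpotent with respect to a valuation `v`
(additively: `v (f ^ n) → +∞`) if the values `v (f ^ n)` eventually drop below every
nonzero value of `v`. -/
def IsTopNilpotent {A Γ : Type*} [CommRing A] [LinearOrderedCommGroupWithZero Γ]
    (v : Valuation A Γ) (f : A) : Prop :=
  ∀ g : A, v g ≠ 0 → ∃ n : ℕ, v (f ^ n) < v g

/-- If `w` specializes to `v` in the adic spectrum, then every `w`-topologically nilpotent
element is `v`-topologically nilpotent. -/
theorem isTopNilpotent_of_specializes {A : Type*} [CommRing A]
    {Γv Γw : Type*} [LinearOrderedCommGroupWithZero Γv] [LinearOrderedCommGroupWithZero Γw]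
    (v : Valuation A Γv) (w : Valuation A Γw)
    (hspec : ∀ f g : A, v f ≤ v g → v g ≠ 0 → w f ≤ w g ∧ w g ≠ 0) :
    ∀ f : A, IsTopNilpotent w f → IsTopNilpotent v f := by
  intro f hf g hg
  obtain ⟨n, hn⟩ := hf g (hspec 0 g (by simp) hg).2
  refine ⟨n, lt_of_not_ge fun h => ?_⟩
  have h0 : v (f ^ n) ≠ 0 := fun h0 => hg (le_zero_iff.mp (h0 ▸ h))
  exact absurd (hspec g (f ^ n) h h0).1 (not_le_of_gt hn)
end

section
/- Let A be a commutative ring and let v : A → Γ_v and w : A → Γ_w be valuations of A with values in linearly ordered commutative groups with zero (multiplicative notation). (i) If w specializes to v, i.e. for all f, g ∈ A: v(f) ≤ v(g) and v(g) ≠ 0 imply w(f) ≤ w(g) and w(g) ≠ 0, then for every f ∈ A, w(f) < 1 implies v(f) < 1 (additively: w(f) > 0 implies v(f) > 0). (ii) Conversely, if the specialization is horizontal, i.e. there exists an injective monotone group homomorphism φ : G_v → G_w with φ(v(f)) = w(f) whenever v(f) ≠ 0, and such that for all f, g ∈ A with v(f) = 0 and v(g) ≠ 0 one has w(f) < w(g),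 then for every f ∈ A, v(f) < 1 implies w(f) < 1. -/
/-- (i) If `w` specializes to `v` in the adic spectrum then `w f < 1` implies `v f < 1`
(additively: `w f > 0 ⟹ v f > 0`); (ii) conversely, if the specialization is horizontal
(the valuations induce an injective monotone homomorphism `G_v ↪ G_w` sending `v f` to
`w f`, with `v g < v f = +∞ ⟹ w g < w f` additively), then `v f < 1` implies `w f < 1`. -/
theorem lt_one_of_specializes {A : Type*} [CommRing A]
    {Γv Γw : Type*} [LinearOrderedCommGroupWithZero Γv] [LinearOrderedCommGroupWithZero Γw]
    (v : Valuation A Γv) (w : Valuation A Γw) :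
    ((∀ f g : A, v f ≤ v g → v g ≠ 0 → w f ≤ w g ∧ w g ≠ 0) →
      ∀ f : A, w f < 1 → v f < 1) ∧
    ((∃ φ : valueSubgroup v →* valueSubgroup w, Function.Injective ⇑φ ∧ Monotone ⇑φ ∧
        (∀ (f : A) (hf : v f ≠ 0),
          ((φ ⟨Units.mk0 (v f) hf, Subgroup.subset_closure ⟨f, rfl⟩⟩ : Γwˣ) : Γw) = w f) ∧
        (∀ f g : A, v f = 0 → v g ≠ 0 → w f < w g)) →
      ∀ f : A, v f < 1 → w f < 1) := by
  refine ⟨fun h f hf => ?_, ?_⟩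
  · by_contra hv
    have hv' : 1 ≤ v f := not_lt.mp hv
    have h0 : v f ≠ 0 := (lt_of_lt_of_le zero_lt_one hv').ne'
    have h1 := (h 1 f (by rw [map_one]; exact hv') h0).1
    rw [map_one] at h1
    exact absurd hf (not_lt.mpr h1)
  · rintro ⟨φ, hinj, hmono, hφ, h0⟩ f hf
    by_cases hv : v f = 0
    · have := h0 f 1 hv (by rw [map_one]; exact one_ne_zero)
      rwa [map_one] at this
    · rw [← hφ f hv]
      set x : valueSubgroup v :=
        ⟨Units.mk0 (v f) hv, Subgroup.subset_closure ⟨f, rfl⟩⟩ with hx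
      have hx1 : x < 1 := by
        have h2 : (Units.mk0 (v f) hv : Γvˣ) < 1 := by
          rw [← Units.val_lt_val]
          exact hf
        exact h2
      have h3 : φ x < φ 1 := hmono.strictMono_of_injective hinj hx1
      rw [map_one] at h3
      have h4 : (φ x : Γwˣ) < 1 := h3
      rw [← Units.val_lt_val] at h4
      exact h4
end

section
/- Let A be a commutative ring and v a valuation on A with values in a linearly ordered commutative group with zero (multiplicative notation) which is nonnegative, i.e. v(f) ≤ 1 for all f ∈ A. Let I and J be ideals of A. Then every element of the product ideal I·J is v-topologically nilpotent if and only if every element of I is v-topologically nilpotent or every element of J is v-topologically nilpotent. -/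
/-- For a nonnegative valuation `v` on `A` and ideals `I`, `J` of `A`, every element of
`I * J` is `v`-topologically nilpotent iff every element of `I` is or every element of `J`
is.  (This is the algebraic content of `]X₁ ∪ X₂[_V = ]X₁[_V ∪ ]X₂[_V`.) -/
theorem isTopNilpotent_mul_ideal_iff {A Γ : Type*} [CommRing A]
    [LinearOrderedCommGroupWithZero Γ] (v : Valuation A Γ) (hv : ∀ f : A, v f ≤ 1)
    (I J : Ideal A) :
    (∀ f ∈ I * J, IsTopNilpotent v f) ↔
      (∀ f ∈ I, IsTopNilpotent v f) ∨ (∀ f ∈ J, IsTopNilpotent v f) := by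
  constructor
  · intro H
    by_contra! hc
    obtain ⟨⟨f, hf, hfn⟩, ⟨h, hh, hhn⟩⟩ := hc
    unfold IsTopNilpotent at hfn hhn
    push Not at hfn hhn
    obtain ⟨a, ha, hfa⟩ := hfn
    obtain ⟨b, hb, hhb⟩ := hhn
    obtain ⟨n, hn⟩ := H (f * h) (Ideal.mul_mem_mul hf hh) (a * b)
      (by rw [map_mul]; exact mul_ne_zero ha hb)
    rw [mul_pow, map_mul, map_mul] at hn
    exact absurd hn (not_lt.mpr (mul_le_mul' (hfa n) (hhb n)))
  · rintro (H | H) f hf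
    · exact H f ((show I * J ≤ I from Ideal.mul_le_left) hf)
    · exact H f ((show I * J ≤ J from Ideal.mul_le_right) hf)
end

section
/- Every valuation v on the ring of integers ℤ, with values in a linearly ordered commutative group with zero (multiplicative notation), is equivalent to exactly one of the following: (i) the trivial valuation (the valuation v₀ with v₀(n) = 1 for n ≠ 0 and v₀(0) = 0); (ii) for a unique prime p, the valuation p̄ given by p̄(n) = 0 if p ∣ n and p̄(n) = 1 otherwise; (iii) for a unique prime p, the p-adic valuation v_p (characterized up to equivalence by: v_p(0) = 0, and for nonzero integers m, n one has v_p(m) ≤ v_p(n) if and only if the exponent of p in the factorization of n is at most the exponent of p in the factorization of m). -/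
/-- The trivial valuation on `ℤ`: `v₀ n = 1` for `n ≠ 0` and `v₀ 0 = 0`. -/
noncomputable def trivialValuationInt : Valuation ℤ (WithZero (Multiplicative ℤ)) where
  toFun n := if n = 0 then 0 else 1
  map_zero' := if_pos rfl
  map_one' := by simp
  map_mul' x y := by
    rcases eq_or_ne x 0 with h | h <;> rcases eq_or_ne y 0 with h' | h' <;>
      simp [h, h', mul_eq_zero]
  map_add_le_max' x y := by
    rcases eq_or_ne x 0 with h | h <;> rcases eq_or_ne y 0 with h' | h' <;>
      rcases eq_or_ne (x + y) 0 with h'' | h'' <;>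
      simp [h, h', h'', zero_le']

/-- The valuation `p̄` on `ℤ` attached to a prime `p`: `p̄ n = 0` if `p ∣ n` and
`p̄ n = 1` otherwise (the trivial valuation with support `pℤ`). -/
noncomputable def primeBarValuation (p : Nat.Primes) :
    Valuation ℤ (WithZero (Multiplicative ℤ)) where
  toFun n := if ((p : ℕ) : ℤ) ∣ n then 0 else 1
  map_zero' := if_pos (dvd_zero _)
  map_one' := by simp [(Nat.prime_iff_prime_int.1 p.2).not_dvd_one]
  map_mul' x y := by
    have hp : Prime ((p : ℕ) : ℤ) := Nat.prime_iff_prime_int.1 p.2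
    by_cases hx : ((p : ℕ) : ℤ) ∣ x <;> by_cases hy : ((p : ℕ) : ℤ) ∣ y <;>
      simp [hp.dvd_mul, hx, hy]
  map_add_le_max' x y := by
    by_cases hx : ((p : ℕ) : ℤ) ∣ x <;> by_cases hy : ((p : ℕ) : ℤ) ∣ y <;>
      by_cases hxy : ((p : ℕ) : ℤ) ∣ (x + y) <;>
      first
        | exact absurd (dvd_add hx hy) hxy
        | simp [hx, hy, hxy, zero_le']

/-- `v` is (equivalent to) the `p`-adic valuation on `ℤ`: for nonzero `m`, `n` one has
`v m ≤ v n` iff the exponent of `p` in `n` is at most the exponent of `p` in `m`.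
(This characterizes the `p`-adic valuation up to equivalence.) -/
def IsPadicType {Γ : Type*} [LinearOrderedCommGroupWithZero Γ]
    (v : Valuation ℤ Γ) (p : Nat.Primes) : Prop :=
  ∀ m n : ℤ, m ≠ 0 → n ≠ 0 → (v m ≤ v n ↔ padicValInt p n ≤ padicValInt p m)

section Helpers

variable {Γ : Type*} [LinearOrderedCommGroupWithZero Γ] (v : Valuation ℤ Γ)

theorem triv_apply (n : ℤ) : trivialValuationInt n = if n = 0 then 0 else 1 := rfl

theorem bar_apply (p : Nat.Primes) (n : ℤ) :
    primeBarValuation p n = if ((p : ℕ) : ℤ) ∣ n then 0 else 1 := rfl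

theorem val_nat_le_one (n : ℕ) : v (n : ℤ) ≤ 1 := by
  induction n with
  | zero => simp
  | succ k ih =>
    push_cast
    exact (v.map_add _ _).trans (by simp [ih])

theorem val_int_le_one (n : ℤ) : v n ≤ 1 := by
  rcases Int.natAbs_eq n with h | h <;> rw [h]
  · exact val_nat_le_one v _
  · rw [Valuation.map_neg]; exact val_nat_le_one v _

theorem val_eq_one_of_not_dvd (q : Nat.Primes) (hq : v ((q : ℕ) : ℤ) < 1) (n : ℤ)
    (hn : ¬ ((q : ℕ) : ℤ) ∣ n) : v n = 1 := by
  refine le_antisymm (val_int_le_one v n) ?_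
  have hp : Prime ((q : ℕ) : ℤ) := Nat.prime_iff_prime_int.1 q.2
  obtain ⟨a, b, h⟩ := (hp.irreducible.coprime_iff_not_dvd).2 hn
  have h1 : (1 : Γ) ≤ max (v (a * ((q : ℕ) : ℤ))) (v (b * n)) := by
    rw [← v.map_one, ← h]; exact v.map_add _ _
  rcases le_max_iff.1 h1 with h2 | h2
  · rw [map_mul] at h2
    exact absurd (h2.trans (mul_le_of_le_one_left' (val_int_le_one v a))) (not_le.2 hq)
  · rw [map_mul] at h2
    exact h2.trans (mul_le_of_le_one_left' (val_int_le_one v b))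

theorem val_nat_eq_one (h : ∀ q : Nat.Primes, v ((q : ℕ) : ℤ) = 1) (n : ℕ) (hn : n ≠ 0) :
    v (n : ℤ) = 1 := by
  induction n using induction_on_primes with
  | zero => exact absurd rfl hn
  | one => simp
  | prime_mul p a hp ih =>
    have ha : a ≠ 0 := by rintro rfl; simp at hn
    have := h ⟨p, hp⟩
    push_cast
    rw [map_mul, ih ha, mul_one]
    exact this

theorem val_eq_pow (q : Nat.Primes) (hq : v ((q : ℕ) : ℤ) < 1) (n : ℤ) (hn : n ≠ 0) :
    v n = v ((q : ℕ) : ℤ) ^ padicValInt q n := by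
  haveI : Fact (Nat.Prime (q : ℕ)) := ⟨q.2⟩
  obtain ⟨c, hc⟩ := padicValInt_dvd (p := (q : ℕ)) n
  have hcq : ¬ ((q : ℕ) : ℤ) ∣ c := by
    intro ⟨d, hd⟩
    have : ((q : ℕ) : ℤ) ^ (padicValInt q n + 1) ∣ n := ⟨d, by
      conv_lhs => rw [hc, hd]
      ring⟩
    rw [padicValInt_dvd_iff] at this
    rcases this with h | h
    · exact hn h
    · omega
  conv_lhs => rw [hc]
  rw [map_mul, map_pow, val_eq_one_of_not_dvd v q hq c hcq, mul_one]

theorem not_triv_bar (p : Nat.Primes) (h1 : v.IsEquiv trivialValuationInt)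
    (h2 : v.IsEquiv (primeBarValuation p)) : False := by
  have h := (h1.symm.trans h2).eq_zero (r := ((p : ℕ) : ℤ))
  rw [triv_apply, bar_apply] at h
  simp [p.2.ne_zero] at h

theorem padic_lt (p : Nat.Primes) (h : IsPadicType v p) : ¬ v 1 ≤ v ((p : ℕ) : ℤ) := by
  haveI : Fact (Nat.Prime (p : ℕ)) := ⟨p.2⟩
  rw [h _ _ one_ne_zero (by exact_mod_cast p.2.ne_zero)]
  simp [padicValInt.self p.2.one_lt]

theorem not_triv_padic (p : Nat.Primes) (h1 : v.IsEquiv trivialValuationInt)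
    (h2 : IsPadicType v p) : False := by
  apply padic_lt v p h2
  rw [h1 1 _]
  simp [triv_apply, p.2.ne_zero]

theorem not_bar_padic (p q : Nat.Primes) (h1 : v.IsEquiv (primeBarValuation q))
    (h2 : IsPadicType v p) : False := by
  haveI : Fact (Nat.Prime (p : ℕ)) := ⟨p.2⟩
  have hp0 : ((p : ℕ) : ℤ) ≠ 0 := by exact_mod_cast p.2.ne_zero
  have hq0 : ((q : ℕ) : ℤ) ≠ 0 := by exact_mod_cast q.2.ne_zero
  have h := (h2 ((q : ℕ) : ℤ) (((q : ℕ) : ℤ) * ((p : ℕ) : ℤ)) hq0 (mul_ne_zero hq0 hp0)).1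
    ((h1 _ _).2 (by simp [bar_apply]))
  rw [padicValInt.mul hq0 hp0, padicValInt.self p.2.one_lt] at h
  omega

theorem bar_unique (p q : Nat.Primes) (h1 : v.IsEquiv (primeBarValuation p))
    (h2 : v.IsEquiv (primeBarValuation q)) : p = q := by
  have h := (h1.symm.trans h2).eq_zero (r := ((q : ℕ) : ℤ))
  rw [bar_apply, bar_apply] at h
  simp only [dvd_refl, if_true, iff_true] at h
  have hd : ((p : ℕ) : ℤ) ∣ ((q : ℕ) : ℤ) := by
    by_contra hc
    simp [hc] at h
  exact Subtype.ext ((Nat.prime_dvd_prime_iff_eq p.2 q.2).1 (by exact_mod_cast hd))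

theorem padic_unique (p q : Nat.Primes) (h1 : IsPadicType v p)
    (h2 : IsPadicType v q) : p = q := by
  by_contra hne
  have h3 := padic_lt v p h1
  rw [h2 _ _ one_ne_zero (by exact_mod_cast p.2.ne_zero)] at h3
  apply h3
  have : ¬ (q : ℕ) ∣ (p : ℕ) := fun hd =>
    hne (Subtype.ext ((Nat.prime_dvd_prime_iff_eq q.2 p.2).1 hd).symm)
  simp [padicValInt, padicValNat.eq_zero_of_not_dvd this]

theorem exists_type : v.IsEquiv trivialValuationInt ∨
    (∃ p : Nat.Primes, v.IsEquiv (primeBarValuation p)) ∨ ∃ p : Nat.Primes, IsPadicType v p := by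
  by_cases h : ∀ q : Nat.Primes, v ((q : ℕ) : ℤ) = 1
  · left
    have key : ∀ n : ℤ, n ≠ 0 → v n = 1 := by
      intro n hn
      have := val_nat_eq_one v h n.natAbs (by simpa using hn)
      rcases Int.natAbs_eq n with h | h <;> rw [h]
      · exact this
      · rwa [Valuation.map_neg]
    intro m n
    rcases eq_or_ne m 0 with hm | hm <;> rcases eq_or_ne n 0 with hn | hn <;>
      simp [triv_apply, hm, hn, key]
  · right
    push Not at h
    obtain ⟨q, hq⟩ := h
    have hlt := lt_of_le_of_ne (val_int_le_one v _) hq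
    by_cases h0 : v ((q : ℕ) : ℤ) = 0
    · left
      refine ⟨q, fun m n => ?_⟩
      have key : ∀ n : ℤ, ((q : ℕ) : ℤ) ∣ n → v n = 0 := by
        rintro n ⟨d, rfl⟩
        simp [h0]
      have key2 := val_eq_one_of_not_dvd v q hlt
      by_cases hm : ((q : ℕ) : ℤ) ∣ m <;> by_cases hn : ((q : ℕ) : ℤ) ∣ n <;>
        simp [bar_apply, hm, hn, key, key2]
    · right
      refine ⟨q, fun m n hm hn => ?_⟩
      rw [val_eq_pow v q hlt m hm, val_eq_pow v q hlt n hn]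
      exact pow_le_pow_iff_right_of_lt_one₀ (zero_lt_iff.2 h0) hlt

end Helpers

/-- Classification of the points of `Spv(ℤ)`: every valuation on `ℤ` is equivalent to
exactly one of the trivial valuation, the valuation `p̄` for a unique prime `p`, or the
`p`-adic valuation `v_p` for a unique prime `p`. -/
theorem valuation_int_classification {Γ : Type*} [LinearOrderedCommGroupWithZero Γ]
    (v : Valuation ℤ Γ) :
    ((v.IsEquiv trivialValuationInt ∧
        ¬(∃ p : Nat.Primes, v.IsEquiv (primeBarValuation p)) ∧
        ¬(∃ p : Nat.Primes, IsPadicType v p)) ∨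
      (¬v.IsEquiv trivialValuationInt ∧
        (∃ p : Nat.Primes, v.IsEquiv (primeBarValuation p)) ∧
        ¬(∃ p : Nat.Primes, IsPadicType v p)) ∨
      (¬v.IsEquiv trivialValuationInt ∧
        ¬(∃ p : Nat.Primes, v.IsEquiv (primeBarValuation p)) ∧
        (∃ p : Nat.Primes, IsPadicType v p))) ∧
    (∀ p q : Nat.Primes, v.IsEquiv (primeBarValuation p) →
      v.IsEquiv (primeBarValuation q) → p = q) ∧
    (∀ p q : Nat.Primes, IsPadicType v p → IsPadicType v q → p = q) := by
  refine ⟨?_, bar_unique v, padic_unique v⟩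
  rcases exists_type v with h | ⟨p, h⟩ | ⟨p, h⟩
  · exact Or.inl ⟨h, fun ⟨p, hp⟩ => not_triv_bar v p h hp, fun ⟨p, hp⟩ => not_triv_padic v p h hp⟩
  · exact Or.inr (Or.inl ⟨fun ht => not_triv_bar v p ht h, ⟨p, h⟩,
      fun ⟨q, hq⟩ => not_bar_padic v q p h hq⟩)
  · exact Or.inr (Or.inr ⟨fun ht => not_triv_padic v p ht h,
      fun ⟨q, hq⟩ => not_bar_padic v p q hq h, ⟨p, h⟩⟩)
end
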